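/- Let S be a ring. A left S-module X has a finitely generated projective resolution if and only if there is an exact sequence ⋯ → G⁻² → G⁻¹ → G⁰ → X → 0 of left S-modules such that each G⁻ⁱ has a finitely generated projective resolution. -/

import Mathlib

/- STATEMENT 8: A left S-module X has a finitely generated projective resolution iff
there is an exact sequence ⋯ → G⁻¹ → G⁰ → X → 0 where each G⁻ⁱ has a finitely
generated projective resolution. -/

universe u v

/-- A left `S`-module `X` has a finitely generated projective resolution:
an exact sequence `⋯ → P¹ → P⁰ → X → 0` with each `Pⁱ` finitely generated projective. -/
def HasFGProjRes (S : Type u) [Ring S] (X : Type v) [AddCommGroup X] [Module S X] : Prop :=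
  ∃ (P : ℕ → ModuleCat.{v} S) (d : ∀ n : ℕ, P (n + 1) →ₗ[S] P n) (ε : P 0 →ₗ[S] X),
    (∀ n, Module.Finite S (P n)) ∧
    (∀ n, Module.Projective S (P n)) ∧
    Function.Surjective ε ∧
    LinearMap.range (d 0) = LinearMap.ker ε ∧
    ∀ n, LinearMap.range (d (n + 1)) = LinearMap.ker (d n)

/-!
Resolutions are handled coinductively: a module is resolved by a class `C` as soon as it lies in
some class `Q` each of whose members `M` admits `0 → K → G → M → 0` with `G` in `C` and `K` in `Q`.
By the horseshoe lemma the modules `FP` resolved by finitely generated projectives are closed under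
extensions. Let `X` be resolved by `FP`, choose `0 → Z → G → X → 0` with `G` in `FP` and `Z`
resolved by `FP`, and a surjection `P → G` with `P` finitely generated projective and kernel in
`FP`. The kernel of `P → X` is an extension of `Z` by the kernel of `P → G`, and pulling this
extension back along the first term of a resolution of `Z` shows that it is again resolved by `FP`.
So coinduction applies.
-/

section ShortExact

variable {S A M B P R : Type*} [Ring S] [AddCommGroup A] [Module S A] [AddCommGroup M] [Module S M]
  [AddCommGroup B] [Module S B] [AddCommGroup P] [Module S P] [AddCommGroup R] [Module S R]

/-- The sequence `0 → A → M → B → 0` of `S`-modules with maps `i` and `p` is short exact. It is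
stated for unbundled modules, so that kernels and products need not be turned into objects of
`ModuleCat S`. -/
structure IsShortExact (i : A →ₗ[S] M) (p : M →ₗ[S] B) : Prop where
  injective : Function.Injective i
  exact : Function.Exact i p
  surjective : Function.Surjective p

theorem isShortExact_subtype_ker {p : M →ₗ[S] B} (hp : Function.Surjective p) :
    IsShortExact (LinearMap.ker p).subtype p :=
  ⟨Subtype.val_injective, p.exact_subtype_ker_map, hp⟩

theorem isShortExact_ker_comp {f : P →ₗ[S] M} (hf : Function.Surjective f) (g : M →ₗ[S] B) :
    IsShortExact (Submodule.inclusion (LinearMap.ker_le_ker_comp f g))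
      (f.restrict (p := LinearMap.ker (g ∘ₗ f)) (q := LinearMap.ker g) fun _ hx => hx) where
  injective := Submodule.inclusion_injective _
  exact := by
    rintro ⟨x, hx⟩
    refine ⟨fun h => ⟨⟨x, congrArg Subtype.val h⟩, rfl⟩, ?_⟩
    rintro ⟨y, hy⟩
    obtain rfl : y.1 = x := congrArg Subtype.val hy
    exact Subtype.ext y.2
  surjective := by
    rintro ⟨y, hy⟩
    obtain ⟨x, rfl⟩ := hf y
    exact ⟨⟨x, hy⟩, rfl⟩

/-- The fibre product `M ×_B R` of two linear maps with codomain `B`, as a submodule of `M × R`. -/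
def fiberProduct (p : M →ₗ[S] B) (q : R →ₗ[S] B) : Submodule S (M × R) :=
  LinearMap.eqLocus (p ∘ₗ LinearMap.fst S M R) (q ∘ₗ LinearMap.snd S M R)

theorem IsShortExact.exists_fiberProduct_snd {i : A →ₗ[S] M} {p : M →ₗ[S] B}
    (h : IsShortExact i p) (q : R →ₗ[S] B) :
    ∃ i' : A →ₗ[S] fiberProduct p q,
      IsShortExact i' (LinearMap.snd S M R ∘ₗ (fiberProduct p q).subtype) := by
  refine ⟨(LinearMap.inl S M R ∘ₗ i).codRestrict _ fun a => ?_, ?_, ?_, ?_⟩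
  · simp [fiberProduct, h.exact.apply_apply_eq_zero a]
  · exact fun a b hab => h.injective (congrArg (fun w => w.1.1) hab)
  · rintro ⟨⟨m, r⟩, hmr : p m = q r⟩
    refine ⟨fun hr : r = 0 => ?_, ?_⟩
    · obtain ⟨a, rfl⟩ := (h.exact m).1 (by rw [hmr, hr, map_zero])
      exact ⟨a, Subtype.ext (Prod.ext rfl hr.symm)⟩
    · rintro ⟨a, ha⟩
      exact (congrArg (fun w => w.1.2) ha).symm
  · intro r
    obtain ⟨m, hm⟩ := h.surjective (q r)
    exact ⟨⟨(m, r), hm⟩, rfl⟩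

theorem IsShortExact.exists_fiberProduct_fst {j : A →ₗ[S] R} {q : R →ₗ[S] B}
    (h : IsShortExact j q) (p : M →ₗ[S] B) :
    ∃ j' : A →ₗ[S] fiberProduct p q,
      IsShortExact j' (LinearMap.fst S M R ∘ₗ (fiberProduct p q).subtype) := by
  refine ⟨(LinearMap.inr S M R ∘ₗ j).codRestrict _ fun a => ?_, ?_, ?_, ?_⟩
  · simp [fiberProduct, h.exact.apply_apply_eq_zero a]
  · exact fun a b hab => h.injective (congrArg (fun w => w.1.2) hab)
  · rintro ⟨⟨m, r⟩, hmr : p m = q r⟩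
    refine ⟨fun hm : m = 0 => ?_, ?_⟩
    · obtain ⟨a, rfl⟩ := (h.exact r).1 (by rw [← hmr, hm, map_zero])
      exact ⟨a, Subtype.ext (Prod.ext hm.symm rfl)⟩
    · rintro ⟨a, ha⟩
      exact (congrArg (fun w => w.1.1) ha).symm
  · intro m
    obtain ⟨r, hr⟩ := h.surjective (p m)
    exact ⟨⟨(m, r), hr.symm⟩, rfl⟩

section Horseshoe

variable {i : A →ₗ[S] M} {p : M →ₗ[S] B} {f : P →ₗ[S] A} {s : R →ₗ[S] M}

theorem IsShortExact.surjective_coprod (h : IsShortExact i p) (hf : Function.Surjective f)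
    (hs : Function.Surjective (p ∘ₗ s)) : Function.Surjective ((i ∘ₗ f).coprod s) := by
  intro m
  obtain ⟨b, hb : p (s b) = p m⟩ := hs (p m)
  obtain ⟨x, hx⟩ := (h.exact (m - s b)).1 (by rw [map_sub, hb, sub_self])
  obtain ⟨a, rfl⟩ := hf x
  exact ⟨(a, b), by simp [hx]⟩

theorem IsShortExact.exists_ker_coprod (h : IsShortExact i p) (hf : Function.Surjective f)
    (s : R →ₗ[S] M) :
    ∃ (u : LinearMap.ker f →ₗ[S] LinearMap.ker ((i ∘ₗ f).coprod s))
      (v : LinearMap.ker ((i ∘ₗ f).coprod s) →ₗ[S] LinearMap.ker (p ∘ₗ s)),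
      IsShortExact u v := by
  have hcomp : p ∘ₗ s ∘ₗ LinearMap.snd S P R = p ∘ₗ (i ∘ₗ f).coprod s := by
    ext x
    · simp [h.exact.apply_apply_eq_zero]
    · simp
  refine ⟨(LinearMap.inl S P R).restrict fun a ha => ?_,
    (LinearMap.snd S P R).restrict fun x hx => ?_, ?_, ?_, ?_⟩
  · simp [LinearMap.mem_ker.1 ha]
  · exact (LinearMap.congr_fun hcomp x).trans (by simp [LinearMap.mem_ker.1 hx])
  · exact fun a b hab => Subtype.ext (congrArg (fun w => w.1.1) hab)
  · rintro ⟨⟨a, b⟩, hab⟩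
    refine ⟨fun hv => ?_, ?_⟩
    · obtain rfl : b = 0 := congrArg Subtype.val hv
      have hfa : f a = 0 := h.injective (by simpa using hab)
      exact ⟨⟨a, hfa⟩, rfl⟩
    · rintro ⟨y, hy⟩
      exact Subtype.ext (congrArg (fun w => w.1.2) hy).symm
  · rintro ⟨b, hb : p (s b) = 0⟩
    obtain ⟨x, hx⟩ := (h.exact (s b)).1 hb
    obtain ⟨a, rfl⟩ := hf x
    exact ⟨⟨(-a, b), by simp [hx]⟩, rfl⟩

end Horseshoe

end ShortExact

section Resolution

variable {S : Type u} [Ring S] {C D : ModuleCat.{v} S → Prop}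

/-- The module `X` is resolved by the class `C`: there is an exact sequence
`⋯ → G 1 → G 0 → X → 0` with every `G n` in `C`. -/
def HasResolution (C : ModuleCat.{v} S → Prop) (X : Type v) [AddCommGroup X] [Module S X] : Prop :=
  ∃ (G : ℕ → ModuleCat.{v} S) (d : ∀ n : ℕ, G (n + 1) →ₗ[S] G n) (ε : G 0 →ₗ[S] X),
    Function.Surjective ε ∧
    LinearMap.range (d 0) = LinearMap.ker ε ∧
    (∀ n, LinearMap.range (d (n + 1)) = LinearMap.ker (d n)) ∧
    ∀ n, C (G n)

theorem HasResolution.mono (hCD : ∀ G, C G → D G) {X : Type v} [AddCommGroup X] [Module S X]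
    (hX : HasResolution C X) : HasResolution D X := by
  obtain ⟨G, d, ε, hε, h0, hd, hG⟩ := hX
  exact ⟨G, d, ε, hε, h0, hd, fun n => hCD _ (hG n)⟩

theorem HasResolution.exists_surjective {X : Type v} [AddCommGroup X] [Module S X]
    (hX : HasResolution C X) :
    ∃ (G : ModuleCat.{v} S) (ε : G →ₗ[S] X),
      C G ∧ Function.Surjective ε ∧ HasResolution C (LinearMap.ker ε) := by
  obtain ⟨G, d, ε, hε, h0, hd, hG⟩ := hX
  have hd0 (x : G 1) : d 0 x ∈ LinearMap.ker ε := h0 ▸ LinearMap.mem_range_self _ x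
  refine ⟨G 0, ε, hG 0, hε, fun n => G (n + 1), fun n => d (n + 1),
    (d 0).codRestrict _ hd0, ?_, ?_, fun n => hd (n + 1), fun n => hG (n + 1)⟩
  · rintro ⟨x, hx⟩
    obtain ⟨y, rfl⟩ := h0.ge hx
    exact ⟨y, rfl⟩
  · rw [LinearMap.ker_codRestrict, hd 0]

theorem HasResolution.of_coinductive {Q : ModuleCat.{v} S → Prop}
    (hQ : ∀ M, Q M → ∃ (K G : ModuleCat.{v} S) (i : K →ₗ[S] G) (ε : G →ₗ[S] M),
      IsShortExact i ε ∧ C G ∧ Q K)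
    {X : ModuleCat.{v} S} (hX : Q X) : HasResolution C X := by
  choose K G i ε hiε hG hK using hQ
  let syzygy (n : ℕ) : {M // Q M} :=
    n.rec ⟨X, hX⟩ fun _ M => ⟨K M.1 M.2, hK M.1 M.2⟩
  let ε' (n : ℕ) : G (syzygy n).1 (syzygy n).2 →ₗ[S] (syzygy n).1 := ε _ _
  let i' (n : ℕ) : (syzygy (n + 1)).1 →ₗ[S] G (syzygy n).1 (syzygy n).2 := i _ _
  have h (n : ℕ) : IsShortExact (i' n) (ε' n) := hiε _ _
  have range_eq (n : ℕ) : LinearMap.range (i' n ∘ₗ ε' (n + 1)) = LinearMap.ker (ε' n) := by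
    rw [LinearMap.range_comp_of_range_eq_top _ (LinearMap.range_eq_top.2 (h (n + 1)).surjective),
      (h n).exact.linearMap_ker_eq]
  refine ⟨fun n => G (syzygy n).1 (syzygy n).2, fun n => i' n ∘ₗ ε' (n + 1), ε' 0,
    (h 0).surjective, range_eq 0, fun n => (range_eq (n + 1)).trans ?_, fun n => hG _ _⟩
  exact (LinearMap.ker_comp_of_ker_eq_bot _ (LinearMap.ker_eq_bot.2 (h n).injective)).symm

theorem HasResolution.of_isShortExact {K G X : Type v} [AddCommGroup K] [Module S K]
    [AddCommGroup G] [Module S G] [AddCommGroup X] [Module S X] {i : K →ₗ[S] G} {ε : G →ₗ[S] X}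
    (h : IsShortExact i ε) (hG : C (.of S G)) (hK : HasResolution C K) : HasResolution C X := by
  refine of_coinductive (X := .of S X) (Q := fun M => ∃ (K G : ModuleCat.{v} S) (i : K →ₗ[S] G)
    (ε : G →ₗ[S] M), IsShortExact i ε ∧ C G ∧ HasResolution C K) ?_
    ⟨.of S K, .of S G, i, ε, h, hG, hK⟩
  rintro M ⟨K, G, i, ε, h, hG, hK⟩
  obtain ⟨G', ε', hG', hε', hK'⟩ := hK.exists_surjective
  exact ⟨K, G, i, ε, h, hG, .of S (LinearMap.ker ε'), G', _, ε',
    isShortExact_subtype_ker hε', hG', hK'⟩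

theorem HasResolution.of_mem (hzero : C (.of S PUnit)) {G : ModuleCat.{v} S} (hG : C G) :
    HasResolution C G :=
  of_coinductive (fun M hM => ⟨.of S PUnit, M, 0, LinearMap.id,
    ⟨Function.injective_of_subsingleton _, fun x => by simp [eq_comm], Function.surjective_id⟩,
    hM, hzero⟩) hG

/-- A class of modules is closed under extensions: in a short exact sequence it contains the middle
term as soon as it contains the outer ones. This is `ObjectProperty.IsClosedUnderExtensions` for
`IsShortExact` in place of short exact `ShortComplex`es. -/
def IsExtensionClosed (C : ModuleCat.{v} S → Prop) : Prop :=
  ∀ ⦃A M B : Type v⦄ [AddCommGroup A] [Module S A] [AddCommGroup M] [Module S M]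
    [AddCommGroup B] [Module S B] (i : A →ₗ[S] M) (p : M →ₗ[S] B),
    IsShortExact i p → C (.of S A) → C (.of S B) → C (.of S M)

theorem isExtensionClosed_hasResolution (hproj : ∀ G, C G → Module.Projective S G)
    (hprod : ∀ G H, C G → C H → C (.of S (G × H))) :
    IsExtensionClosed fun M : ModuleCat.{v} S => HasResolution C M := by
  intro A M B _ _ _ _ _ _ i p h hA hB
  refine HasResolution.of_coinductive (X := .of S M) (Q := fun M => ∃ (A B : ModuleCat.{v} S)
    (i : A →ₗ[S] M) (p : M →ₗ[S] B), IsShortExact i p ∧ HasResolution C A ∧ HasResolution C B) ?_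
    ⟨.of S A, .of S B, i, p, h, hA, hB⟩
  rintro M ⟨A, B, i, p, h, hA, hB⟩
  obtain ⟨P, f, hP, hf, hfK⟩ := hA.exists_surjective
  obtain ⟨R, g, hR, hg, hgK⟩ := hB.exists_surjective
  have := hproj R hR
  obtain ⟨s, rfl⟩ := Module.projective_lifting_property p g h.surjective
  obtain ⟨u, v, huv⟩ := h.exists_ker_coprod hf s
  exact ⟨.of S (LinearMap.ker ((i ∘ₗ f).coprod s)), .of S (P × R), _, _,
    isShortExact_subtype_ker (h.surjective_coprod hf hg), hprod P R hP hR,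
    .of S (LinearMap.ker f), .of S (LinearMap.ker (p ∘ₗ s)), u, v, huv, hfK, hgK⟩

theorem IsExtensionClosed.hasResolution_of_isShortExact (hC : IsExtensionClosed C)
    {A M B : Type v} [AddCommGroup A] [Module S A] [AddCommGroup M] [Module S M]
    [AddCommGroup B] [Module S B] {i : A →ₗ[S] M} {p : M →ₗ[S] B} (h : IsShortExact i p)
    (hA : C (.of S A)) (hB : HasResolution C B) : HasResolution C M := by
  obtain ⟨G, q, hG, hq, hK⟩ := hB.exists_surjective
  obtain ⟨i', hi'⟩ := h.exists_fiberProduct_snd q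
  obtain ⟨j', hj'⟩ := (isShortExact_subtype_ker hq).exists_fiberProduct_fst p
  exact .of_isShortExact hj' (hC _ _ hi' hA hG) hK

theorem HasResolution.of_hasResolution
    (hC : IsExtensionClosed fun M : ModuleCat.{v} S => HasResolution C M)
    {X : Type v} [AddCommGroup X] [Module S X]
    (hX : HasResolution (fun M : ModuleCat.{v} S => HasResolution C M) X) :
    HasResolution C X := by
  refine of_coinductive (X := .of S X) (Q := fun M => HasResolution (HasResolution C ·) M) ?_ hX
  intro M hM
  obtain ⟨G, ε, hG, hε, hZ⟩ := hM.exists_surjective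
  obtain ⟨P, f, hP, hf, hK⟩ := hG.exists_surjective
  exact ⟨.of S (LinearMap.ker (ε ∘ₗ f)), P, _, _, isShortExact_subtype_ker (hε.comp hf), hP,
    hC.hasResolution_of_isShortExact (isShortExact_ker_comp hf ε) hK hZ⟩

theorem hasFGProjRes_iff_resolution_by_fgpr_general (hzero : C (.of S PUnit))
    (hproj : ∀ G, C G → Module.Projective S G) (hprod : ∀ G H, C G → C H → C (.of S (G × H)))
    (X : Type v) [AddCommGroup X] [Module S X] :
    HasResolution C X ↔ HasResolution (fun M : ModuleCat.{v} S => HasResolution C M) X :=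
  ⟨.mono fun _ => .of_mem hzero, .of_hasResolution (isExtensionClosed_hasResolution hproj hprod)⟩

theorem hasFGProjRes_iff_hasResolution (X : Type v) [AddCommGroup X] [Module S X] :
    HasFGProjRes S X ↔
      HasResolution (fun G : ModuleCat.{v} S => Module.Finite S G ∧ Module.Projective S G) X := by
  constructor
  · rintro ⟨P, d, ε, hfin, hproj, hε, h0, hd⟩
    exact ⟨P, d, ε, hε, h0, hd, fun n => ⟨hfin n, hproj n⟩⟩
  · rintro ⟨P, d, ε, hε, h0, hd, hP⟩
    exact ⟨P, d, ε, fun n => (hP n).1, fun n => (hP n).2, hε, h0, hd⟩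

end Resolution

theorem hasFGProjRes_iff_resolution_by_fgpr (S : Type u) [Ring S]
    (X : Type v) [AddCommGroup X] [Module S X] :
    HasFGProjRes S X ↔
      ∃ (G : ℕ → ModuleCat.{v} S) (d : ∀ n : ℕ, G (n + 1) →ₗ[S] G n) (ε : G 0 →ₗ[S] X),
        Function.Surjective ε ∧
        LinearMap.range (d 0) = LinearMap.ker ε ∧
        (∀ n, LinearMap.range (d (n + 1)) = LinearMap.ker (d n)) ∧
        ∀ n, HasFGProjRes S (G n) := by
  simp only [hasFGProjRes_iff_hasResolution]
  refine hasFGProjRes_iff_resolution_by_fgpr_general ⟨inferInstance, inferInstance⟩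
    (fun _ hG => hG.2) (fun G H ⟨_, _⟩ ⟨_, _⟩ => ⟨?_, ?_⟩) X
  · exact inferInstanceAs (Module.Finite S (G × H))
  · exact inferInstanceAs (Module.Projective S (G × H))
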